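/- Let R be a commutative ring and M an R-module. Then M is flat Mittag-Leffler if and only if every finite subset of M is contained in a submodule of M that is countably generated, projective, and pure in M. (Lemma B.1(1) of the appendix by Štovíček and Trlifaj.) -/

import Mathlib

universe u

open TensorProduct

/-- The canonical map `M ⊗[R] (∏ i, Q i) →ₗ[R] ∏ i, (M ⊗[R] Q i)`,
determined by `m ⊗ (q_i)_i ↦ (m ⊗ q_i)_i`. -/
noncomputable def tensorPiMap (R : Type u) [CommRing R] (M : Type u) [AddCommGroup M]
    [Module R M] {ι : Type u} (Q : ι → Type u) [∀ i, AddCommGroup (Q i)]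
    [∀ i, Module R (Q i)] :
    (M ⊗[R] (∀ i, Q i)) →ₗ[R] ∀ i, M ⊗[R] Q i :=
  LinearMap.pi fun i => LinearMap.lTensor M (LinearMap.proj i)

/-- An `R`-module `M` is Mittag-Leffler if for every family `(Q i)` of `R`-modules the
canonical map `M ⊗[R] (∏ i, Q i) → ∏ i, (M ⊗[R] Q i)` is injective. -/
def IsMittagLeffler (R : Type u) [CommRing R] (M : Type u) [AddCommGroup M]
    [Module R M] : Prop :=
  ∀ (ι : Type u) (Q : ι → Type u) [∀ i, AddCommGroup (Q i)] [∀ i, Module R (Q i)],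
    Function.Injective (tensorPiMap R M Q)

/-- An `R`-module is flat Mittag-Leffler if it is flat and Mittag-Leffler. -/
def IsFlatMittagLeffler (R : Type u) [CommRing R] (M : Type u) [AddCommGroup M]
    [Module R M] : Prop :=
  Module.Flat R M ∧ IsMittagLeffler R M

/-- A submodule `N ⊆ M` is pure if for every `R`-module `Q` the induced map
`Q ⊗[R] N → Q ⊗[R] M` is injective. -/
def IsPureSubmodule {R : Type u} [CommRing R] {M : Type u} [AddCommGroup M] [Module R M]
    (N : Submodule R M) : Prop :=
  ∀ (Q : Type u) [AddCommGroup Q] [Module R Q],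
    Function.Injective (LinearMap.lTensor Q N.subtype)

/-!
Following Raynaud and Gruson, flatness and the Mittag-Leffler condition together let any map
`u : Rⁿ → M` be factored as `Rⁿ → Rᵏ → M` so that `Rⁿ → Rᵏ` and `u` have the same kernel after
tensoring with any module. Iterating from a map whose image contains the given finite set gives a
sequence `Rᵏ⁰ → Rᵏ¹ → ⋯` over `M`; let `N` be the union of the images. A tensor over `N` that dies
in `M` already dies one step further along the sequence, so `N` is pure. Moreover each transition
map `a n` equals `c n ∘ a (n + 1) ∘ a n` for some `c n`, so lifts along a surjection onto `N` can be
corrected step by step until they are compatible, and `N` is projective.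

Conversely, every tensor over `M` comes from a pure submodule that contains its finitely many left
factors; when that submodule is projective it is flat Mittag-Leffler, and purity transfers the
required injectivity from it to `M`.
-/

section Dominates

variable {R : Type u} [CommRing R]

/-- `Dominates g f` says that `g` dominates `f` in the sense of Raynaud and Gruson: for every
`R`-module `Q` the kernel of `f ⊗ Q` is contained in the kernel of `g ⊗ Q`. -/
def Dominates {F G M : Type*} [AddCommGroup F] [Module R F] [AddCommGroup G] [Module R G]
    [AddCommGroup M] [Module R M] (g : F →ₗ[R] G) (f : F →ₗ[R] M) : Prop :=
  ∀ (Q : Type u) [AddCommGroup Q] [Module R Q],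
    LinearMap.ker (f.rTensor Q) ≤ LinearMap.ker (g.rTensor Q)

variable {F G M N : Type*} [AddCommGroup F] [Module R F] [AddCommGroup G] [Module R G]
  [AddCommGroup M] [Module R M] [AddCommGroup N] [Module R N]

theorem Dominates.of_comp_right {g : F →ₗ[R] G} {f : F →ₗ[R] M} {h : M →ₗ[R] N}
    (hg : Dominates g (h ∘ₗ f)) : Dominates g f := by
  intro Q _ _
  refine le_trans ?_ (hg Q)
  rw [LinearMap.rTensor_comp]
  exact LinearMap.ker_le_ker_comp _ _

theorem Dominates.ker_lTensor_le {g : F →ₗ[R] G} {f : F →ₗ[R] M} (h : Dominates g f)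
    (Q : Type u) [AddCommGroup Q] [Module R Q] :
    LinearMap.ker (f.lTensor Q) ≤ LinearMap.ker (g.lTensor Q) := by
  simp_rw [← LinearMap.comm_comp_rTensor_comp_comm_eq, LinearEquiv.ker_comp, LinearMap.ker_comp]
  exact Submodule.comap_mono (h Q)

theorem Dominates.ker_le {g : F →ₗ[R] G} {f : F →ₗ[R] M} (h : Dominates g f) :
    LinearMap.ker f ≤ LinearMap.ker g := by
  intro x hx
  have hx' : x ⊗ₜ[R] (1 : R) ∈ LinearMap.ker (f.rTensor R) := by
    simp [LinearMap.mem_ker.1 hx]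
  simpa using congrArg (TensorProduct.rid R G) (h R hx')

theorem lTensor_rTensor_apply_comm (f : F →ₗ[R] G) (g : M →ₗ[R] N) (x : F ⊗[R] M) :
    g.lTensor G (f.rTensor M x) = f.rTensor N (g.lTensor F x) := by
  simp only [← LinearMap.comp_apply, LinearMap.lTensor_comp_rTensor,
    LinearMap.rTensor_comp_lTensor]

theorem dualTensorHom_lTensor (g : M →ₗ[R] N) (x : Module.Dual R F ⊗[R] M) :
    dualTensorHom R F N (g.lTensor _ x) = g ∘ₗ dualTensorHom R F M x := by
  induction x with
  | zero => simp
  | tmul φ m => ext; simp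
  | add x y hx hy => simp only [map_add, hx, hy, LinearMap.comp_add]

theorem dualTensorHom_rTensor_dualMap (f : F →ₗ[R] G) (x : Module.Dual R G ⊗[R] M) :
    dualTensorHom R F M (f.dualMap.rTensor M x) = dualTensorHom R G M x ∘ₗ f := by
  induction x with
  | zero => simp
  | tmul φ m => ext; simp
  | add x y hx hy => simp only [map_add, hx, hy, LinearMap.add_comp]

theorem Dominates.exists_comp_eq {F : Type u} [AddCommGroup F] [Module R F] [Module.Finite R F]
    [Module.Projective R F] {L : Type*} [AddCommGroup L] [Module R L] [Module.Finite R L]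
    [Module.Projective R L] {g : F →ₗ[R] G} {f : F →ₗ[R] L} (h : Dominates g f) :
    ∃ c : L →ₗ[R] G, c ∘ₗ f = g := by
  -- Test domination on `Q = Fᵛ / fᵛ(Lᵛ)`: the element of `Q ⊗ F` induced by `id` dies in `Q ⊗ L`,
  -- hence in `Q ⊗ G`, so the element of `Fᵛ ⊗ G` representing `g` comes from `Lᵛ ⊗ G`.
  let π := (LinearMap.range f.dualMap).mkQ
  obtain ⟨θF, hθF⟩ := (dualTensorHom_bijective (R := R) (M := F) (N := F)).2 LinearMap.id
  obtain ⟨θL, hθL⟩ := (dualTensorHom_bijective (R := R) (M := L) (N := L)).2 LinearMap.id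
  have hθ : f.lTensor _ θF = f.dualMap.rTensor L θL := by
    apply dualTensorHom_bijective.1
    rw [dualTensorHom_lTensor, dualTensorHom_rTensor_dualMap, hθF, hθL, LinearMap.comp_id,
      LinearMap.id_comp]
  have hexact : Function.Exact f.dualMap π := LinearMap.exact_map_mkQ_range _
  have hπ : Function.Surjective π := Submodule.mkQ_surjective _
  have hπL : f.lTensor _ (π.rTensor F θF) = 0 := by
    rw [lTensor_rTensor_apply_comm, hθ, (rTensor_exact L hexact hπ).apply_apply_eq_zero]
  have hπG : π.rTensor G (g.lTensor _ θF) = 0 := by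
    rw [← lTensor_rTensor_apply_comm]
    exact h.ker_lTensor_le _ hπL
  obtain ⟨ψ, hψ⟩ := (rTensor_exact G hexact hπ _).1 hπG
  refine ⟨dualTensorHom R L G ψ, ?_⟩
  rw [← dualTensorHom_rTensor_dualMap, hψ, dualTensorHom_lTensor, hθF, LinearMap.comp_id]

end Dominates

section TensorPiMap

variable {R : Type u} [CommRing R] {M N : Type u} [AddCommGroup M] [Module R M]
  [AddCommGroup N] [Module R N] {ι : Type u} {Q : ι → Type u} [∀ i, AddCommGroup (Q i)]
  [∀ i, Module R (Q i)]

theorem tensorPiMap_rTensor_apply (f : N →ₗ[R] M) (x : N ⊗[R] (∀ i, Q i)) (i : ι) :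
    tensorPiMap R M Q (f.rTensor _ x) i = f.rTensor (Q i) (tensorPiMap R N Q x i) := by
  simp only [tensorPiMap, LinearMap.pi_apply, lTensor_rTensor_apply_comm]

theorem tensorPiMap_surjective [Module.Finite R M] : Function.Surjective (tensorPiMap R M Q) := by
  intro x
  obtain ⟨n, f, hf⟩ := Module.Finite.exists_fin' R M
  have hx (i : ι) : ∃ q : Fin n → Q i, ∑ j, f (Pi.single j 1) ⊗ₜ[R] q j = x i := by
    obtain ⟨z, hz⟩ := LinearMap.rTensor_surjective (Q i) hf (x i)
    obtain ⟨q, hq⟩ := TensorProduct.eq_repr_basis_left (Pi.basisFun R (Fin n)) z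
    refine ⟨q, ?_⟩
    simp [← hz, ← hq, Finsupp.sum_fintype]
  choose q hq using hx
  refine ⟨∑ j, f (Pi.single j 1) ⊗ₜ[R] fun i => q i j, ?_⟩
  ext i
  simp [tensorPiMap, hq]

theorem IsMittagLeffler.of_rTensor_injective (hM : IsMittagLeffler R M) (f : N →ₗ[R] M)
    (hf : ∀ (P : Type u) [AddCommGroup P] [Module R P], Function.Injective (f.rTensor P)) :
    IsMittagLeffler R N := by
  intro ι Q _ _
  rw [injective_iff_map_eq_zero]
  intro x hx
  refine (injective_iff_map_eq_zero _).1 (hf _) x (hM ι Q ?_)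
  ext i
  simp [tensorPiMap_rTensor_apply, hx]

theorem IsMittagLeffler.self : IsMittagLeffler R R := by
  intro ι Q _ _
  have h (x : R ⊗[R] (∀ i, Q i)) (i : ι) : TensorProduct.lid R (Q i) (tensorPiMap R R Q x i) =
      TensorProduct.lid R (∀ i, Q i) x i := by
    induction x with
    | zero => simp
    | tmul r q => simp [tensorPiMap]
    | add x y hx hy => simp [hx, hy]
  refine fun x y hxy => (TensorProduct.lid R (∀ i, Q i)).injective (funext fun i => ?_)
  rw [← h, ← h, hxy]

theorem IsMittagLeffler.finsupp (α : Type u) : IsMittagLeffler R (α →₀ R) := by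
  classical
  intro ι Q _ _
  rw [injective_iff_map_eq_zero]
  intro x hx
  have hcoord (b : α) : (Finsupp.lapply (R := R) b).rTensor (∀ i, Q i) x = 0 := by
    apply IsMittagLeffler.self ι Q
    ext i
    simp [tensorPiMap_rTensor_apply, hx]
  apply (TensorProduct.finsuppScalarLeft R (∀ i, Q i) α).injective
  ext1 b
  simp [TensorProduct.finsuppScalarLeft_apply, hcoord]

theorem IsMittagLeffler.of_projective [Module.Projective R M] : IsMittagLeffler R M := by
  obtain ⟨s, hs⟩ := Module.projective_def'.1 ‹Module.Projective R M›
  refine (IsMittagLeffler.finsupp M).of_rTensor_injective s fun P _ _ => ?_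
  refine Function.LeftInverse.injective
    (g := (Finsupp.linearCombination R id).rTensor P) fun x => ?_
  rw [← LinearMap.rTensor_comp_apply, hs, LinearMap.rTensor_id_apply]

end TensorPiMap

section PureSubmodules

variable {R : Type u} [CommRing R] {M : Type u} [AddCommGroup M] [Module R M]

theorem IsPureSubmodule.rTensor_injective {N : Submodule R M} (hN : IsPureSubmodule N)
    (Q : Type u) [AddCommGroup Q] [Module R Q] : Function.Injective (N.subtype.rTensor Q) :=
  LinearMap.lTensor_inj_iff_rTensor_inj _ _ |>.1 (hN Q)

theorem exists_finset_forall_mem_range_rTensor_subtype {R M Q : Type*} [CommRing R]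
    [AddCommGroup M] [Module R M] [AddCommGroup Q] [Module R Q] (x : M ⊗[R] Q) :
    ∃ s : Finset M, ∀ N : Submodule R M, (s : Set M) ⊆ N →
      x ∈ LinearMap.range (N.subtype.rTensor Q) := by
  classical
  obtain ⟨S, rfl⟩ := TensorProduct.exists_finset x
  refine ⟨S.image Prod.fst, fun N hN => Submodule.sum_mem _ fun i hi => ?_⟩
  exact ⟨⟨i.1, hN (Finset.mem_coe.2 (Finset.mem_image_of_mem _ hi))⟩ ⊗ₜ i.2, rfl⟩

theorem flat_of_forall_finset_subset_pure
    (H : ∀ s : Finset M, ∃ N : Submodule R M, (s : Set M) ⊆ N ∧ Module.Flat R N ∧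
      IsPureSubmodule N) : Module.Flat R M := by
  rw [Module.Flat.iff_lTensor_preserves_injective_linearMap]
  intro P Q _ _ _ _ f hf
  rw [injective_iff_map_eq_zero]
  intro x hx
  obtain ⟨s, hs⟩ := exists_finset_forall_mem_range_rTensor_subtype x
  obtain ⟨N, hsN, hflat, hpure⟩ := H s
  obtain ⟨z, rfl⟩ := hs N hsN
  have hz : N.subtype.rTensor Q (f.lTensor N z) = 0 := by
    rw [← lTensor_rTensor_apply_comm, hx]
  rw [map_eq_zero_iff _ (hpure.rTensor_injective Q),
    map_eq_zero_iff _ (Module.Flat.lTensor_preserves_injective_linearMap f hf)] at hz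
  rw [hz, map_zero]

theorem IsMittagLeffler.of_forall_finset_subset_pure
    (H : ∀ s : Finset M, ∃ N : Submodule R M, (s : Set M) ⊆ N ∧ IsMittagLeffler R N ∧
      IsPureSubmodule N) : IsMittagLeffler R M := by
  intro ι Q _ _
  rw [injective_iff_map_eq_zero]
  intro x hx
  obtain ⟨s, hs⟩ := exists_finset_forall_mem_range_rTensor_subtype x
  obtain ⟨N, hsN, hML, hpure⟩ := H s
  obtain ⟨z, rfl⟩ := hs N hsN
  have hz : tensorPiMap R N Q z = 0 := by
    ext i
    apply hpure.rTensor_injective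
    simp [← tensorPiMap_rTensor_apply, hx]
  rw [(map_eq_zero_iff _ (hML ι Q)).1 hz, map_zero]

end PureSubmodules

section Tower

variable {R : Type u} [CommRing R] {N : Type*} [AddCommGroup N] [Module R N]
  {F : ℕ → Type*} [∀ n, AddCommGroup (F n)] [∀ n, Module R (F n)]
  {a : ∀ n, F n →ₗ[R] F (n + 1)} {y : ∀ n, F n →ₗ[R] N}

theorem mem_iSup_range_iff_of_tower (hy : ∀ n, y (n + 1) ∘ₗ a n = y n) {v : N} :
    v ∈ ⨆ n, LinearMap.range (y n) ↔ ∃ n r, y n r = v := by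
  have hmono : Monotone fun n => LinearMap.range (y n) := by
    refine monotone_nat_of_le_succ fun n => ?_
    rw [← hy n]
    exact LinearMap.range_comp_le_range _ _
  simp [Submodule.mem_iSup_of_directed _ hmono.directed_le]

theorem exists_rTensor_eq_of_tower (hy : ∀ n, y (n + 1) ∘ₗ a n = y n)
    (hsurj : ∀ v, ∃ n r, y n r = v) (Q : Type*) [AddCommGroup Q] [Module R Q] (x : N ⊗[R] Q) :
    ∃ n r, (y n).rTensor Q r = x := by
  have hyQ (n : ℕ) : (y (n + 1)).rTensor Q ∘ₗ (a n).rTensor Q = (y n).rTensor Q := by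
    rw [← LinearMap.rTensor_comp, hy]
  rw [← mem_iSup_range_iff_of_tower hyQ]
  induction x with
  | zero => exact zero_mem _
  | tmul v q =>
    obtain ⟨n, r, rfl⟩ := hsurj v
    exact Submodule.mem_iSup_of_mem n ⟨r ⊗ₜ q, LinearMap.rTensor_tmul ..⟩
  | add x x' hx hx' => exact add_mem hx hx'

theorem rTensor_injective_of_tower_of_dominates {M : Type*} [AddCommGroup M] [Module R M]
    (hy : ∀ n, y (n + 1) ∘ₗ a n = y n) (hsurj : ∀ v, ∃ n r, y n r = v) {f : N →ₗ[R] M}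
    (hf : ∀ n, Dominates (a n) (f ∘ₗ y n)) (Q : Type u) [AddCommGroup Q] [Module R Q] :
    Function.Injective (f.rTensor Q) := by
  rw [injective_iff_map_eq_zero]
  intro x hx
  obtain ⟨n, r, rfl⟩ := exists_rTensor_eq_of_tower hy hsurj Q x
  have hr : (a n).rTensor Q r = 0 :=
    hf n Q (by rwa [LinearMap.mem_ker, LinearMap.rTensor_comp_apply])
  rw [← hy, LinearMap.rTensor_comp_apply, hr, map_zero]

theorem exists_comp_eq_of_tower {X : Type*} [AddCommGroup X] [Module R X]
    (hy : ∀ n, y (n + 1) ∘ₗ a n = y n) (hsurj : ∀ v, ∃ n r, y n r = v)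
    {s : ∀ n, F n →ₗ[R] X} (hs : ∀ n, s (n + 1) ∘ₗ a n = s n)
    (hker : ∀ n, LinearMap.ker (y n) ≤ LinearMap.ker (s n)) :
    ∃ σ : N →ₗ[R] X, ∀ n, σ ∘ₗ y n = s n := by
  let graph : Submodule R (N × X) := ⨆ n, LinearMap.range ((y n).prod (s n))
  have mem_graph {v : N × X} : v ∈ graph ↔ ∃ n r, (y n r, s n r) = v :=
    mem_iSup_range_iff_of_tower (a := a) fun n => by rw [LinearMap.prod_comp, hy, hs]
  have hgraph : ∀ v ∈ graph, v.1 = 0 → v.2 = 0 := by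
    intro v hv hv0
    obtain ⟨n, r, rfl⟩ := mem_graph.1 hv
    exact hker n hv0
  have hdom (v : N) : v ∈ graph.map (LinearMap.fst R N X) := by
    obtain ⟨n, r, rfl⟩ := hsurj v
    exact ⟨_, mem_graph.2 ⟨n, r, rfl⟩, rfl⟩
  refine ⟨graph.toLinearPMap.toFun ∘ₗ LinearMap.id.codRestrict _ hdom, fun n => ?_⟩
  ext r
  have hmem := sub_mem (graph.mem_graph_toLinearPMap hgraph ⟨y n r, hdom _⟩)
    (mem_graph.2 ⟨n, r, rfl⟩)
  exact sub_eq_zero.1 (hgraph _ hmem (sub_self _))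

theorem exists_compatible_lifts_of_tower {X : Type*} [AddCommGroup X] [Module R X]
    [∀ n, Module.Projective R (F n)] (hy : ∀ n, y (n + 1) ∘ₗ a n = y n)
    {c : ∀ n, F (n + 2) →ₗ[R] F (n + 1)} (hc : ∀ n, c n ∘ₗ a (n + 1) ∘ₗ a n = a n)
    {p : X →ₗ[R] N} (hp : Function.Surjective p) :
    ∃ t : ∀ n, F (n + 1) →ₗ[R] X, (∀ n, p ∘ₗ t n = y (n + 1)) ∧
      ∀ n, t (n + 1) ∘ₗ a (n + 1) ∘ₗ a n = t n ∘ₗ a n := by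
  choose l hl using fun n => Module.projective_lifting_property p (y n) hp
  -- Correct the arbitrary lift `l (n + 2)` by its defect from the lift already chosen on
  -- `F (n + 1)`; `c n` transports this defect to `F (n + 2)`.
  let t : ∀ n, F (n + 1) →ₗ[R] X := fun n => n.rec (l 1) fun n tn =>
    l (n + 2) + (tn - l (n + 2) ∘ₗ a (n + 1)) ∘ₗ c n
  have ht (n : ℕ) : t (n + 1) = l (n + 2) + (t n - l (n + 2) ∘ₗ a (n + 1)) ∘ₗ c n := rfl
  refine ⟨t, fun n => ?_, fun n => ?_⟩
  · induction n with
    | zero => exact hl 1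
    | succ n ih =>
      rw [ht, LinearMap.comp_add, ← LinearMap.comp_assoc, LinearMap.comp_sub, ih,
        ← LinearMap.comp_assoc, hl, hy, sub_self, LinearMap.zero_comp, add_zero]
  · rw [ht, LinearMap.add_comp, LinearMap.comp_assoc _ (c n), hc, LinearMap.sub_comp,
      LinearMap.comp_assoc, add_sub_cancel]

end Tower

theorem projective_of_tower_of_dominates {R : Type u} [CommRing R] {N : Type*} [AddCommGroup N]
    [Module R N] {F : ℕ → Type u} [∀ n, AddCommGroup (F n)] [∀ n, Module R (F n)]
    [∀ n, Module.Finite R (F n)] [∀ n, Module.Projective R (F n)]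
    {a : ∀ n, F n →ₗ[R] F (n + 1)} {y : ∀ n, F n →ₗ[R] N} (hy : ∀ n, y (n + 1) ∘ₗ a n = y n)
    (hsurj : ∀ v, ∃ n r, y n r = v) (hdom : ∀ n, Dominates (a n) (y n)) :
    Module.Projective R N := by
  have hdom' (n : ℕ) : Dominates (a n) (a (n + 1) ∘ₗ a n) := by
    refine Dominates.of_comp_right (h := y (n + 2)) ?_
    rw [← LinearMap.comp_assoc, hy, hy]
    exact hdom n
  choose c hc using fun n => (hdom' n).exists_comp_eq
  let p : (N →₀ R) →ₗ[R] N := Finsupp.linearCombination R id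
  have hp : Function.Surjective p := Finsupp.linearCombination_id_surjective R N
  obtain ⟨t, hpt, hta⟩ := exists_compatible_lifts_of_tower hy hc hp
  obtain ⟨σ, hσ⟩ := exists_comp_eq_of_tower hy hsurj (s := fun n => t n ∘ₗ a n) hta
    fun n => (hdom n).ker_le.trans (LinearMap.ker_le_ker_comp _ _)
  refine .of_split σ p (LinearMap.ext fun v => ?_)
  obtain ⟨n, r, rfl⟩ := hsurj v
  have hpσ : p ∘ₗ σ ∘ₗ y n = y n := by
    rw [hσ, ← LinearMap.comp_assoc, hpt, hy]
  exact LinearMap.congr_fun hpσ r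

theorem exists_countable_span_eq_iSup {R M ι : Type*} [Semiring R] [AddCommMonoid M] [Module R M]
    [Countable ι] {N : ι → Submodule R M} (hN : ∀ i, (N i).FG) :
    ∃ T : Set M, T.Countable ∧ Submodule.span R T = ⨆ i, N i := by
  choose S hS using hN
  refine ⟨⋃ i, S i, Set.countable_iUnion fun i => (S i).countable_toSet, ?_⟩
  simp_rw [Submodule.span_iUnion, hS]

section Existence

variable {R : Type u} [CommRing R]

theorem exists_factorization_of_rTensor_apply_eq_zero {F M Q : Type*} [AddCommGroup F] [Module R F]
    [Module.Free R F] [Module.Finite R F] [AddCommGroup M] [Module R M] [Module.Flat R M]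
    [AddCommGroup Q] [Module R Q] {u : F →ₗ[R] M} {x : F ⊗[R] Q} (hx : u.rTensor Q x = 0) :
    ∃ (k : ℕ) (a : F →ₗ[R] (Fin k → R)) (y : (Fin k → R) →ₗ[R] M),
      y ∘ₗ a = u ∧ a.rTensor Q x = 0 := by
  let b := Module.Free.chooseBasis R F
  obtain ⟨q, rfl⟩ := TensorProduct.eq_repr_basis_left b x
  rw [Finsupp.sum_fintype _ _ (by simp)] at hx ⊢
  have hsum : ∑ i, q i ⊗ₜ[R] u (b i) = 0 := by
    simpa using congrArg (TensorProduct.comm R M Q) hx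
  obtain ⟨k, A, m, hm, hA⟩ :=
    TensorProduct.vanishesTrivially_of_sum_tmul_eq_zero_of_rTensor_injective R
      (Module.Flat.rTensor_preserves_injective_linearMap _ (Submodule.injective_subtype _)) hsum
  refine ⟨k, b.constr R A, Fintype.linearCombination R m, b.ext fun i => ?_, ?_⟩
  · simp [hm, Fintype.linearCombination_apply]
  · have hAq : ∑ i, q i ⊗ₜ[R] A i = 0 :=
      TensorProduct.sum_tmul_eq_zero_of_vanishesTrivially R
        ⟨k, A, fun j => Pi.single j 1, fun i => pi_eq_sum_univ' (A i), hA⟩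
    simpa using congrArg (TensorProduct.comm R Q (Fin k → R)) hAq

variable {M : Type u} [AddCommGroup M] [Module R M]

theorem IsFlatMittagLeffler.exists_dominating_factorization (hM : IsFlatMittagLeffler R M)
    {F : Type u} [AddCommGroup F] [Module R F] [Module.Free R F] [Module.Finite R F]
    (u : F →ₗ[R] M) :
    ∃ (k : ℕ) (a : F →ₗ[R] (Fin k → R)) (y : (Fin k → R) →ₗ[R] M),
      y ∘ₗ a = u ∧ Dominates a u := by
  -- If every factorization of `u` fails on some test module, then no factorization can work for
  -- the product of these test modules, contradicting flatness.
  obtain ⟨_, hML⟩ := hM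
  by_contra! hcon
  let I : Type u := Σ k : ℕ, {p : (F →ₗ[R] (Fin k → R)) × ((Fin k → R) →ₗ[R] M) //
    p.2 ∘ₗ p.1 = u}
  have hbad (i : I) : ∃ (Q : Type u) (_ : AddCommGroup Q) (_ : Module R Q) (x : F ⊗[R] Q),
      u.rTensor Q x = 0 ∧ i.2.1.1.rTensor Q x ≠ 0 := by
    obtain ⟨k, ⟨a, y⟩, hay⟩ := i
    simpa [Dominates, SetLike.le_def] using hcon k a y hay
  choose Q _ _ x hux hax using hbad
  obtain ⟨z, hz⟩ := tensorPiMap_surjective x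
  have huz : u.rTensor _ z = 0 := by
    apply hML I Q
    ext i
    simp [tensorPiMap_rTensor_apply, hz, hux]
  obtain ⟨k, a, y, hay, haz⟩ := exists_factorization_of_rTensor_apply_eq_zero huz
  apply hax ⟨k, ⟨a, y⟩, hay⟩
  rw [← hz, ← tensorPiMap_rTensor_apply, haz, map_zero, Pi.zero_apply]

theorem IsFlatMittagLeffler.exists_dominating_tower (hM : IsFlatMittagLeffler R M) {n : ℕ}
    (u : (Fin n → R) →ₗ[R] M) :
    ∃ (k : ℕ → ℕ) (a : ∀ i, (Fin (k i) → R) →ₗ[R] (Fin (k (i + 1)) → R))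
      (y : ∀ i, (Fin (k i) → R) →ₗ[R] M), (∀ i, y (i + 1) ∘ₗ a i = y i) ∧
      (∀ i, Dominates (a i) (y i)) ∧ LinearMap.range (y 0) = LinearMap.range u := by
  choose k a y hay hdom using fun t : Σ n : ℕ, (Fin n → R) →ₗ[R] M =>
    hM.exists_dominating_factorization t.2
  let t (i : ℕ) : Σ n : ℕ, (Fin n → R) →ₗ[R] M := i.rec ⟨n, u⟩ fun _ t => ⟨k t, y t⟩
  exact ⟨fun i => (t i).1, fun i => a (t i), fun i => (t i).2, fun i => hay (t i),
    fun i => hdom (t i), rfl⟩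

theorem IsFlatMittagLeffler.exists_le_countably_generated_projective_pure
    (hM : IsFlatMittagLeffler R M) {n : ℕ} (u : (Fin n → R) →ₗ[R] M) :
    ∃ N : Submodule R M, LinearMap.range u ≤ N ∧
      (∃ T : Set M, T.Countable ∧ Submodule.span R T = N) ∧
      Module.Projective R N ∧ IsPureSubmodule N := by
  obtain ⟨k, a, y, hy, hdom, hy0⟩ := hM.exists_dominating_tower u
  let N := ⨆ i, LinearMap.range (y i)
  let z (i : ℕ) : (Fin (k i) → R) →ₗ[R] N :=
    (y i).codRestrict N fun r => Submodule.mem_iSup_of_mem i ⟨r, rfl⟩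
  have hz (i : ℕ) : z (i + 1) ∘ₗ a i = z i :=
    LinearMap.ext fun r => Subtype.ext (LinearMap.congr_fun (hy i) r)
  have hsurj (v : N) : ∃ i r, z i r = v := by
    obtain ⟨i, r, hr⟩ := (mem_iSup_range_iff_of_tower hy).1 v.2
    exact ⟨i, r, Subtype.ext hr⟩
  have hzdom (i : ℕ) : Dominates (a i) (N.subtype ∘ₗ z i) := hdom i
  refine ⟨N, hy0.ge.trans (le_iSup (fun i => LinearMap.range (y i)) 0),
    exists_countable_span_eq_iSup fun i => Module.Finite.iff_fg.1 inferInstance,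
    projective_of_tower_of_dominates hz hsurj fun i => (hzdom i).of_comp_right, fun Q _ _ => ?_⟩
  exact LinearMap.lTensor_inj_iff_rTensor_inj _ _ |>.2
    (rTensor_injective_of_tower_of_dominates hz hsurj hzdom Q)

end Existence

/-- **Lemma B.1(1)**: `M` is flat Mittag-Leffler iff every finite subset of `M` is
contained in a countably generated, projective, pure submodule of `M`. -/
theorem isFlatMittagLeffler_iff_finsets_contained_in_countably_generated_projective_pure
    (R : Type u) [CommRing R] (M : Type u) [AddCommGroup M] [Module R M] :
    IsFlatMittagLeffler R M ↔
      ∀ s : Finset M, ∃ N : Submodule R M,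
        (s : Set M) ⊆ (N : Set M) ∧
        (∃ T : Set M, T.Countable ∧ Submodule.span R T = N) ∧
        Module.Projective R N ∧
        IsPureSubmodule N := by
  constructor
  · intro hM s
    obtain ⟨N, hsN, hN⟩ := hM.exists_le_countably_generated_projective_pure
      (Fintype.linearCombination R fun i => (s.equivFin.symm i : M))
    refine ⟨N, fun m hm => hsN ?_, hN⟩
    rw [Fintype.range_linearCombination]
    exact Submodule.subset_span ⟨s.equivFin ⟨m, hm⟩, by simp⟩
  · intro H
    constructor
    · refine flat_of_forall_finset_subset_pure fun s => ?_
      obtain ⟨N, hsN, -, hproj, hpure⟩ := H s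
      exact ⟨N, hsN, inferInstance, hpure⟩
    · refine IsMittagLeffler.of_forall_finset_subset_pure fun s => ?_
      obtain ⟨N, hsN, -, hproj, hpure⟩ := H s
      exact ⟨N, hsN, .of_projective, hpure⟩
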